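/- Let R be a polynomial ring over a field K, let I be an ideal generated by n ≥ 2 quadrics contained in a linear prime ideal (x, y) of height two (x, y linearly independent linear forms), and assume the local multiplicity satisfies e(R_{(x,y)}/I_{(x,y)}) ≥ 2. Then pd(R/I) ≤ n + 2. -/

import Mathlib

open MvPolynomial Filter

universe u

/-- `PdLE R n M` means the `R`-module `M` has projective dimension at most `n`:
either `M` is projective (`n = 0`), or `M` is a quotient of a free module by a
submodule of projective dimension at most `n - 1`. -/
def PdLE (R : Type u) [CommRing R] : ℕ → (M : Type u) → [AddCommGroup M] → [Module R M] → Prop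
  | 0, M, _, _ => Module.Projective R M
  | n + 1, M, _, _ => ∃ (F : Type u) (_ : AddCommGroup F) (_ : Module R F),
      Module.Free R F ∧ ∃ f : F →ₗ[R] M, Function.Surjective f ∧ PdLE R n (LinearMap.ker f)

/-- The projective dimension of an `R`-module `M`, as an element of `ℕ∞`
(`⊤` if `M` has no finite free resolution). -/
noncomputable def projDim (R : Type u) [CommRing R] (M : Type u) [AddCommGroup M]
    [Module R M] : ℕ∞ :=
  sInf ((fun n : ℕ => (n : ℕ∞)) '' {n : ℕ | PdLE R n M})

/-- The height of an ideal: the infimum of the heights of the prime ideals containing it. -/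
noncomputable def idealHeight {R : Type*} [CommRing R] (I : Ideal R) : ℕ∞ :=
  ⨅ p ∈ {p : PrimeSpectrum R | I ≤ p.asIdeal}, Order.height p

/-- The length of a module, defined as the Krull dimension of its lattice of submodules. -/
noncomputable def moduleLength (R : Type u) [CommRing R] (M : Type u) [AddCommGroup M]
    [Module R M] : WithBot ℕ∞ :=
  Order.krullDim (Submodule R M)

/-- `IsHSMultiplicity R mx I e` asserts that the Hilbert–Samuel multiplicity of `R/I`
with respect to the ideal `mx` equals `e`: for `d = dim R/I` there is a polynomial `P`
of degree `d` with `e = d! · (leading coefficient of P)` such that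
`length (R/(I + mx^n)) = P(n)` for all large `n`. -/
def IsHSMultiplicity (R : Type u) [CommRing R] (mx I : Ideal R) (e : ℕ) : Prop :=
  ∃ (d : ℕ) (P : Polynomial ℚ),
    ringKrullDim (R ⧸ I) = (d : WithBot ℕ∞) ∧
    P.natDegree = d ∧
    (e : ℚ) = P.leadingCoeff * d.factorial ∧
    ∀ᶠ n : ℕ in Filter.atTop, ∃ k : ℕ, (k : ℚ) = P.eval (n : ℚ) ∧
      moduleLength R (R ⧸ (I ⊔ mx ^ n)) = ((k : ℕ∞) : WithBot ℕ∞)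

/-- A matrix over a `K`-algebra is `1`-generic if it has no generalized zero entry:
for every nonzero vectors `u`, `v` of scalars, `uᵀ M v ≠ 0`. -/
def OneGeneric (K : Type*) [Field K] {R : Type u} [CommRing R] [Algebra K R]
    {m l : ℕ} (M : Matrix (Fin m) (Fin l) R) : Prop :=
  ∀ (u : Fin m → K) (v : Fin l → K), u ≠ 0 → v ≠ 0 →
    ∑ i, ∑ j, algebraMap K R (u i * v j) * M i j ≠ 0

/-- The ideal of all `2 × 2` minors of a `2 × l` matrix. -/
def minors2 {R : Type u} [CommRing R] {l : ℕ} (M : Matrix (Fin 2) (Fin l) R) : Ideal R :=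
  Ideal.span (Set.range fun p : Fin l × Fin l => M 0 p.1 * M 1 p.2 - M 0 p.2 * M 1 p.1)

/-- The homogeneous maximal ideal of a polynomial ring. -/
noncomputable def maxIdeal (K : Type*) [Field K] (σ : Type*) : Ideal (MvPolynomial σ K) :=
  Ideal.span (Set.range (X : σ → MvPolynomial σ K))

/-- The ideal represented by minors by the `2 × (n+1)` matrix with first column `(x, y)ᵀ`
and remaining columns `(u j, v j)ᵀ`: it is generated by the `2 × 2` minors involving
the first column. -/
def repByMinors {R : Type u} [CommRing R] {n : ℕ} (x y : R) (u v : Fin n → R) : Ideal R :=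
  Ideal.span (Set.range fun j : Fin n => x * v j - y * u j)

/-!
Write `g i = a i * x + b i * y` with linear forms `a i`, `b i`, and let `P = (x, y)`. If some minor
`a i * b j - a j * b i` were outside `P`, Cramer's rule would give `I_P = P R_P`, so that
`R_P / I_P` would be a field, of multiplicity one. Hence the `2 × n` matrix with rows `a` and `b`
has rank at most one over the domain `R / P`. As its entries are linear forms, its first row
vanishes, or its second row is a scalar multiple of the first, or its columns are scalar multiples
of a single one; in each case all the `a i` and `b i` are spanned by `x`, `y` and `max n 2` further
linear forms. So the quadrics live in a polynomial subring on at most `max n 2 + 2` linear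
forms, over which `R` is flat, and Hilbert's syzygy theorem for that subring bounds the projective
dimension.
-/

universe v

section ProjectiveDimension

open CategoryTheory

theorem hasProjectiveDimensionLE_ker_iff {R : Type u} [Ring R] {F M : Type u} [AddCommGroup F]
    [Module R F] [Module.Projective R F] [AddCommGroup M] [Module R M] {f : F →ₗ[R] M}
    (hf : Function.Surjective f) (n : ℕ) :
    HasProjectiveDimensionLE (ModuleCat.of R f.ker) n ↔
      HasProjectiveDimensionLE (ModuleCat.of R M) (n + 1) :=
  ((f.shortExact_shortComplexKer hf).hasProjectiveDimensionLT_X₃_iff n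
    ((IsProjective.iff_projective F).1 ‹_›)).symm

theorem pdLE_iff_hasProjectiveDimensionLE {R : Type u} [CommRing R] {n : ℕ} {M : Type u}
    [AddCommGroup M] [Module R M] :
    PdLE R n M ↔ HasProjectiveDimensionLE (ModuleCat.of R M) n := by
  induction n generalizing M with
  | zero =>
    exact (IsProjective.iff_projective (R := R) M :
      Module.Projective R M ↔ Projective (ModuleCat.of R M)).trans
        (projective_iff_hasProjectiveDimensionLE_zero _)
  | succ n ih =>
    constructor
    · rintro ⟨F, _, _, _, f, hf, hker⟩
      exact (hasProjectiveDimensionLE_ker_iff hf n).1 (ih.1 hker)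
    · intro h
      have hf := Finsupp.linearCombination_id_surjective R M
      exact ⟨M →₀ R, _, _, inferInstance, _, hf,
        ih.2 ((hasProjectiveDimensionLE_ker_iff hf n).2 h)⟩

theorem projDim_le_of_hasProjectiveDimensionLE {R : Type u} [CommRing R] {n : ℕ} {M : Type u}
    [AddCommGroup M] [Module R M] (h : HasProjectiveDimensionLE (ModuleCat.of R M) n) :
    projDim R M ≤ n :=
  sInf_le ⟨n, pdLE_iff_hasProjectiveDimensionLE.2 h, rfl⟩

open TensorProduct in
theorem hasProjectiveDimensionLE_baseChange {A : Type u} {B : Type (max u v)} [CommRing A]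
    [CommRing B] [Algebra A B] [Module.Flat A B] {n : ℕ} {M : Type u} [AddCommGroup M]
    [Module A M] (h : HasProjectiveDimensionLE (ModuleCat.of A M) n) :
    HasProjectiveDimensionLE (ModuleCat.of B (B ⊗[A] M)) n := by
  rw [← pdLE_iff_hasProjectiveDimensionLE] at h
  induction n generalizing M with
  | zero =>
    have : Module.Projective A M := h
    exact pdLE_iff_hasProjectiveDimensionLE.1 (inferInstanceAs (Module.Projective B (B ⊗[A] M)))
  | succ n ih =>
    obtain ⟨F, _, _, _, f, hf, hker⟩ := h
    have hexact : Function.Exact (f.ker.subtype.baseChange B) (f.baseChange B) :=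
      lTensor_exact B f.exact_subtype_ker_map hf
    let S := ModuleCat.shortComplexOfCompEqZero _ _ hexact.linearMap_comp_eq_zero
    have hS : S.ShortExact := ModuleCat.shortComplex_shortExact S hexact
      (Module.Flat.lTensor_preserves_injective_linearMap _ f.ker.injective_subtype)
      (LinearMap.lTensor_surjective B hf)
    exact (hS.hasProjectiveDimensionLT_X₃_iff n
      ((IsProjective.iff_projective (B ⊗[A] F)).1 inferInstance)).2 (ih hker)

end ProjectiveDimension

section GlobalDimension

open CategoryTheory TensorProduct
open scoped Polynomial

/-- `R` has global dimension at most `d`. Testing the modules in the universe of `R` suffices for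
the syzygy theorem, where `R` is a polynomial ring over a field. -/
def GlobalDimLE (R : Type u) [Ring R] (d : ℕ) : Prop :=
  ∀ M : ModuleCat.{u} R, HasProjectiveDimensionLE M d

attribute [local instance] RingHomInvPair.of_ringEquiv in
theorem GlobalDimLE.of_ringEquiv {R S : Type u} [Ring R] [Ring S] (e : R ≃+* S) {d : ℕ}
    (h : GlobalDimLE R d) : GlobalDimLE S d := by
  intro M
  let : Module R M := Module.compHom M e.toRingHom
  let e' : M ≃ₛₗ[RingHomClass.toRingHom e] M :=
    { AddEquiv.refl M with map_smul' := fun _ _ => rfl }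
  have := h (ModuleCat.of R M)
  exact ModuleCat.hasProjectiveDimensionLE_of_semiLinearEquiv (M := ModuleCat.of R M) e e' d

theorem globalDimLE_zero_of_isSemisimpleRing (R : Type u) [Ring R] [IsSemisimpleRing R] :
    GlobalDimLE R 0 := fun M =>
  (projective_iff_hasProjectiveDimensionLE_zero M).1
    ((IsProjective.iff_projective M).1 (Module.projective_of_isSemisimpleRing R M))

theorem eq_zero_of_X_smul_eq_map {A M : Type*} [CommRing A] [AddCommGroup M] [Module A M]
    (f : M →ₗ[A] M) {z : PolynomialModule A M}
    (h : (Polynomial.X : A[X]) • z = PolynomialModule.map A f z) : z = 0 := by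
  have hcoeff (k : ℕ) : z.coeff k = f (z.coeff (k + 1)) := by
    have hX : ((Polynomial.X : A[X]) • z).coeff (k + 1) = z.coeff k := by
      simp [← Polynomial.monomial_one_one_eq_X, PolynomialModule.monomial_smul_apply]
    rw [← hX, h]
    rfl
  by_contra hz
  obtain ⟨k, hk, hmax⟩ := z.coeff.support.exists_max_image id (by simpa using hz)
  have hsucc : z.coeff (k + 1) = 0 := by
    by_contra hne
    exact (hmax _ (Finsupp.mem_support_iff.2 hne)).not_gt k.lt_succ_self
  exact Finsupp.mem_support_iff.1 hk (by rw [hcoeff, hsucc, map_zero])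

variable {A : Type*} (M : Type*) [CommRing A] [AddCommGroup M] [Module A M] [Module A[X] M]
  [IsScalarTower A A[X] M]

/-- The map `X ⊗ 1 - 1 ⊗ X` on `A[X] ⊗[A] M`, the first arrow of the standard resolution
`0 → A[X] ⊗[A] M → A[X] ⊗[A] M → M → 0` of an `A[X]`-module `M`. -/
noncomputable def characteristicMap : A[X] ⊗[A] M →ₗ[A[X]] A[X] ⊗[A] M :=
  LinearMap.lsmul A[X] _ Polynomial.X -
    ((LinearMap.lsmul A[X] M Polynomial.X).restrictScalars A).baseChange A[X]

variable {M}

theorem characteristicMap_tmul (p : A[X]) (m : M) :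
    characteristicMap M (p ⊗ₜ m) =
      (p * Polynomial.X) ⊗ₜ m - p ⊗ₜ[A] ((Polynomial.X : A[X]) • m) := by
  simp [characteristicMap, smul_tmul', mul_comm]

theorem characteristicMap_injective :
    Function.Injective (characteristicMap (A := A) M) := by
  let f := (LinearMap.lsmul A[X] M Polynomial.X).restrictScalars A
  let e := PolynomialModule.polynomialTensorProductLEquivPolynomialModule A M
  have he (z) : e (f.baseChange A[X] z) = PolynomialModule.map A f (e z) := by
    induction z with
    | zero => simp
    | add z w hz hw => simp [hz, hw]
    | tmul p m =>
      simp [e, PolynomialModule.polynomialTensorProductLEquivPolynomialModule,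
        PolynomialModule.map_smul]
  rw [injective_iff_map_eq_zero]
  intro z hz
  rw [← e.map_eq_zero_iff]
  refine eq_zero_of_X_smul_eq_map f ?_
  rw [← he, ← map_smul]
  exact congrArg e (sub_eq_zero.1 hz)

theorem tmul_sub_one_tmul_mem_range_characteristicMap (p : A[X]) (m : M) :
    p ⊗ₜ m - 1 ⊗ₜ[A] (p • m) ∈ (characteristicMap (A := A) M).range := by
  induction p using Polynomial.induction_on generalizing m with
  | C a =>
    rw [← mul_one (Polynomial.C a), ← Polynomial.smul_eq_C_mul, smul_assoc, one_smul, smul_tmul,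
      sub_self]
    exact zero_mem _
  | add p q hp hq =>
    rw [add_tmul, add_smul, tmul_add, add_sub_add_comm]
    exact add_mem (hp m) (hq m)
  | monomial n a ih =>
    rw [pow_succ, ← mul_assoc, mul_smul]
    have hX := LinearMap.mem_range_self (characteristicMap (A := A) M)
      ((Polynomial.C a * Polynomial.X ^ n) ⊗ₜ m)
    rw [characteristicMap_tmul] at hX
    rw [← sub_add_sub_cancel]
    exact add_mem hX (ih ((Polynomial.X : A[X]) • m))

theorem characteristicMap_exact : Function.Exact (characteristicMap M)
    (LinearMap.liftBaseChange A[X] (LinearMap.id : M →ₗ[A] M)) := by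
  set ev := LinearMap.liftBaseChange A[X] (LinearMap.id : M →ₗ[A] M)
  have hrange (z) : z - 1 ⊗ₜ ev z ∈ (characteristicMap M).range := by
    induction z with
    | zero => simp
    | add z w hz hw =>
      rw [map_add, tmul_add, add_sub_add_comm]
      exact add_mem hz hw
    | tmul p m => exact tmul_sub_one_tmul_mem_range_characteristicMap p m
  rw [LinearMap.exact_iff]
  refine le_antisymm (fun z hz => ?_) ?_
  · simpa [LinearMap.mem_ker.1 hz] using hrange z
  · rw [LinearMap.range_le_ker_iff]
    ext m
    simp [characteristicMap_tmul, ev]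

theorem GlobalDimLE.polynomial {A : Type u} [CommRing A] {d : ℕ} (h : GlobalDimLE A d) :
    GlobalDimLE A[X] (d + 1) := by
  intro M
  let : Module A M := Module.compHom M (Polynomial.C : A →+* A[X])
  have : IsScalarTower A A[X] M := ⟨fun a p m => by rw [Polynomial.smul_eq_C_mul, mul_smul]; rfl⟩
  let ev := LinearMap.liftBaseChange A[X] (LinearMap.id : M →ₗ[A] M)
  have hev : Function.Surjective ev := fun m => ⟨1 ⊗ₜ m, by simp [ev]⟩
  have hexact : Function.Exact (characteristicMap M) ev := characteristicMap_exact
  let S := ModuleCat.shortComplexOfCompEqZero (characteristicMap M) ev hexact.linearMap_comp_eq_zero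
  have hS : S.ShortExact :=
    ModuleCat.shortComplex_shortExact S hexact characteristicMap_injective hev
  have hd : HasProjectiveDimensionLE (ModuleCat.of A[X] (A[X] ⊗[A] M)) d :=
    hasProjectiveDimensionLE_baseChange (h (ModuleCat.of A M))
  exact hS.hasProjectiveDimensionLT_X₃ (d + 1) hd
    (hasProjectiveDimensionLT_of_ge _ (d + 1) _ (Nat.le_succ _))

theorem globalDimLE_mvPolynomial_fin (K : Type u) [Field K] (r : ℕ) :
    GlobalDimLE (MvPolynomial (Fin r) K) r := by
  induction r with
  | zero =>
    have := (MvPolynomial.isEmptyAlgEquiv K (Fin 0)).symm.toRingEquiv.isSemisimpleRing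
    exact globalDimLE_zero_of_isSemisimpleRing _
  | succ r ih => exact ih.polynomial.of_ringEquiv (finSuccEquiv K r).symm.toRingEquiv

end GlobalDimension

section LinearCoordinates

variable {K σ ι : Type*} [Field K] {v : ι → MvPolynomial σ K}

theorem sumExtend_inl {V : Type*} [AddCommGroup V] [Module K V] {c : ι → V}
    (hc : LinearIndependent K c) (i : ι) : Module.Basis.sumExtend hc (Sum.inl i) = c i := by
  rw [Module.Basis.sumExtend, Module.Basis.reindex_apply, Module.Basis.extend_apply_self]
  rfl

theorem exists_algEquiv_X_inl_eq (hli : LinearIndependent K v) (hv : ∀ i, (v i).IsHomogeneous 1) :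
    ∃ (κ : Set (σ →₀ K)) (ψ : MvPolynomial (ι ⊕ κ) K ≃ₐ[K] MvPolynomial σ K),
      ∀ i, ψ (X (Sum.inl i)) = v i := by
  let lin : (σ →₀ K) →ₗ[K] MvPolynomial σ K := Finsupp.linearCombination K X
  have hlin (i) : ∃ c, lin c = v i := by
    rw [← LinearMap.mem_range, Finsupp.range_linearCombination,
      ← homogeneousSubmodule_one_eq_span_X]
    exact hv i
  choose c hc using hlin
  have hcli : LinearIndependent K c := .of_comp lin (by rwa [← funext hc] at hli)
  let b := Module.Basis.sumExtend hcli
  let e₀ := SymmetricAlgebra.equivMvPolynomial (Finsupp.basisSingleOne (R := K) (ι := σ))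
  have he₀ (w) : e₀ (SymmetricAlgebra.ι K _ w) = lin w := by
    refine LinearMap.congr_fun (f := e₀.toLinearMap ∘ₗ SymmetricAlgebra.ι K _) (g := lin) ?_ w
    refine Finsupp.basisSingleOne.ext fun i => ?_
    simpa [lin] using SymmetricAlgebra.equivMvPolynomial_ι_apply Finsupp.basisSingleOne i
  refine ⟨_, (SymmetricAlgebra.equivMvPolynomial b).symm.trans e₀, fun i => ?_⟩
  rw [← hc, ← he₀, AlgEquiv.trans_apply, ← sumExtend_inl hcli,
    ← SymmetricAlgebra.equivMvPolynomial_ι_apply b,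
    AlgEquiv.symm_apply_apply]

theorem flat_rename_inl (R α β : Type*) [CommRing R] :
    (rename (R := R) (Sum.inl : α → α ⊕ β)).toRingHom.Flat := by
  let e := (renameEquiv R (Equiv.sumComm α β)).trans (sumAlgEquiv R β α)
  have : rename Sum.inl = e.symm.toAlgHom.comp
      (IsScalarTower.toAlgHom R (MvPolynomial α R) (MvPolynomial β (MvPolynomial α R))) := by
    ext i
    simp [e]
  rw [this]
  exact (RingHom.flat_algebraMap_iff.2 inferInstance).comp (.of_bijective e.symm.bijective)

theorem flat_aeval_of_linearIndependent (hli : LinearIndependent K v)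
    (hv : ∀ i, (v i).IsHomogeneous 1) : (aeval v : MvPolynomial ι K →ₐ[K] _).toRingHom.Flat := by
  obtain ⟨κ, ψ, hψ⟩ := exists_algEquiv_X_inl_eq hli hv
  have : aeval v = ψ.toAlgHom.comp (rename Sum.inl) := by
    ext i
    simp [hψ]
  rw [this]
  exact (flat_rename_inl K ι κ).comp (.of_bijective ψ.bijective)

theorem isPrime_idealOfVars (R α : Type*) [CommRing R] [IsDomain R] :
    (idealOfVars α R).IsPrime := by
  have : idealOfVars α R = RingHom.ker (constantCoeff : MvPolynomial α R →+* R) := by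
    ext p
    rw [← pow_one (idealOfVars α R), mem_pow_idealOfVars_iff']
    simp [constantCoeff_eq, Finsupp.degree_eq_zero_iff]
  rw [this]
  exact RingHom.ker_isPrime _

theorem isPrime_span_range_of_linearIndependent (hli : LinearIndependent K v)
    (hv : ∀ i, (v i).IsHomogeneous 1) : (Ideal.span (Set.range v)).IsPrime := by
  obtain ⟨κ, ψ, hψ⟩ := exists_algEquiv_X_inl_eq hli hv
  let e := (sumAlgEquiv K ι κ).symm.trans ψ
  have : (idealOfVars ι (MvPolynomial κ K)).map e = Ideal.span (Set.range v) := by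
    rw [idealOfVars, Ideal.map_span, ← Set.range_comp]
    congr 2
    ext1 i
    simp [e, hψ]
  rw [← this]
  have := isPrime_idealOfVars (MvPolynomial κ K) ι
  exact Ideal.map_isPrime_of_equiv e

theorem isPrime_span_of_isHomogeneous_one {s : Set (MvPolynomial σ K)}
    (hs : ∀ p ∈ s, p.IsHomogeneous 1) : (Ideal.span s).IsPrime := by
  obtain ⟨t, hts, hspan, hli⟩ := exists_linearIndependent K s
  have : Ideal.span s = Ideal.span t := by
    rw [Ideal.span, Ideal.span, ← Submodule.span_span_of_tower K, ← hspan,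
      Submodule.span_span_of_tower]
  rw [this, ← Subtype.range_coe (s := t)]
  exact isPrime_span_range_of_linearIndependent hli fun p => hs p (hts p.2)

end LinearCoordinates

section LinearForms

variable {K σ ι : Type*} [Field K]

attribute [local instance] MvPolynomial.gradedAlgebra in
theorem homogeneousComponent_add_mul {R σ : Type*} [CommSemiring R] {i j : ℕ} (p : MvPolynomial σ R)
    {q : MvPolynomial σ R} (hq : q.IsHomogeneous j) :
    homogeneousComponent (i + j) (p * q) = homogeneousComponent i p * q := by
  have h (n : ℕ) (f : MvPolynomial σ R) :
      (DirectSum.decompose (homogeneousSubmodule σ R) f n : MvPolynomial σ R) =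
        homogeneousComponent n f := decomposition.decompose'_apply f n
  rw [← h, ← h, DirectSum.coe_decompose_mul_add_of_right_mem (homogeneousSubmodule σ R) hq]

theorem exists_eq_mul_add_mul_of_mem_span_pair {d e : ℕ} {x y q : MvPolynomial σ K}
    (hx : x.IsHomogeneous e) (hy : y.IsHomogeneous e) (hq : q.IsHomogeneous (d + e))
    (h : q ∈ Ideal.span {x, y}) :
    ∃ a b : MvPolynomial σ K, a.IsHomogeneous d ∧ b.IsHomogeneous d ∧ a * x + b * y = q := by
  obtain ⟨a, b, rfl⟩ := Ideal.mem_span_pair.1 h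
  refine ⟨homogeneousComponent d a, homogeneousComponent d b,
    homogeneousComponent_isHomogeneous d a, homogeneousComponent_isHomogeneous d b, ?_⟩
  rw [← homogeneousComponent_add_mul a hx, ← homogeneousComponent_add_mul b hy, ← map_add,
    homogeneousComponent_eq_self hq]

variable {s : Set (MvPolynomial σ K)}

theorem mem_span_of_mem_idealSpan {d : ℕ} (hs : ∀ p ∈ s, p.IsHomogeneous d)
    {p : MvPolynomial σ K} (hp : p.IsHomogeneous d) (h : p ∈ Ideal.span s) :
    p ∈ Submodule.span K s := by
  obtain ⟨n, c, q, rfl⟩ := Submodule.mem_span_set'.1 h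
  rw [← homogeneousComponent_eq_self hp, map_sum]
  refine sum_mem fun i _ => ?_
  have hi := homogeneousComponent_add_mul (i := 0) (c i) (hs _ (q i).2)
  rw [zero_add, homogeneousComponent_zero, ← smul_eq_C_mul] at hi
  rw [smul_eq_mul, hi]
  exact Submodule.smul_mem _ _ (Submodule.subset_span (q i).2)

theorem rank_one_trichotomy (hs : ∀ p ∈ s, p.IsHomogeneous 1) {a b : ι → MvPolynomial σ K}
    (ha : ∀ i, (a i).IsHomogeneous 1) (hb : ∀ i, (b i).IsHomogeneous 1)
    (hab : ∀ i j, a i * b j - a j * b i ∈ Ideal.span s) :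
    (∀ i, a i ∈ Submodule.span K s) ∨
      (∃ c : K, ∀ i, b i - c • a i ∈ Submodule.span K s) ∨
      ∃ k, ∀ i, ∃ c : K, a i - c • a k ∈ Submodule.span K s ∧
        b i - c • b k ∈ Submodule.span K s := by
  have mem_span {c : K} {p q} (hp : p.IsHomogeneous 1) (hq : q.IsHomogeneous 1)
      (h : p - c • q ∈ Ideal.span s) : p - c • q ∈ Submodule.span K s :=
    mem_span_of_mem_idealSpan hs (hp.sub ((homogeneousSubmodule σ K 1).smul_mem c hq)) h
  have hle : (Submodule.span K s : Set (MvPolynomial σ K)) ⊆ Ideal.span s :=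
    Submodule.span_subset_span K _ s
  refine or_iff_not_imp_left.2 fun hnot => ?_
  obtain ⟨k, hk⟩ := not_forall.1 hnot
  have hak : a k ∉ Ideal.span s := fun h => hk (mem_span_of_mem_idealSpan hs (ha k) h)
  have cancel {p} (hp : a k * p ∈ Ideal.span s) : p ∈ Ideal.span s :=
    ((isPrime_span_of_isHomogeneous_one hs).mem_or_mem hp).resolve_left hak
  have hs' : ∀ p ∈ insert (a k) s, p.IsHomogeneous 1 := Set.forall_mem_insert.2 ⟨ha k, hs⟩
  have exists_smul {p} (hp : p.IsHomogeneous 1) (h : p ∈ Ideal.span (insert (a k) s)) :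
      ∃ c : K, p - c • a k ∈ Ideal.span s := by
    obtain ⟨c, z, hz, rfl⟩ := Submodule.mem_span_insert.1 (mem_span_of_mem_idealSpan hs' hp h)
    exact ⟨c, by simpa using hle hz⟩
  by_cases hbk : b k ∈ Ideal.span (insert (a k) s)
  · obtain ⟨c, hc⟩ := exists_smul (hb k) hbk
    refine .inl ⟨c, fun i => mem_span (hb i) (ha i) (cancel ?_)⟩
    convert add_mem (hab k i) (Ideal.mul_mem_left _ (a i) hc) using 1
    simp only [smul_eq_C_mul]
    ring
  · refine .inr ⟨k, fun i => ?_⟩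
    -- Modulo `s`, the prime element `a k` divides `a i * b k` but not `b k`.
    have hai : a i ∈ Ideal.span (insert (a k) s) := by
      refine ((isPrime_span_of_isHomogeneous_one hs').mem_or_mem ?_).resolve_right hbk
      rw [← sub_add_cancel (a i * b k) (a k * b i)]
      exact add_mem (Ideal.span_mono (Set.subset_insert _ _) (hab i k))
        (Ideal.mul_mem_right _ _ (Ideal.subset_span (Set.mem_insert _ _)))
    obtain ⟨c, hc⟩ := exists_smul (ha i) hai
    refine ⟨c, mem_span (ha i) (ha k) hc, mem_span (hb i) (hb k) (cancel ?_)⟩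
    convert add_mem (hab k i) (Ideal.mul_mem_right (b k) _ hc) using 1
    simp only [smul_eq_C_mul]
    ring

theorem exists_finset_superset_of_rank_one [Fintype ι] {s : Finset (MvPolynomial σ K)}
    (hs : ∀ p ∈ s, p.IsHomogeneous 1) {a b : ι → MvPolynomial σ K}
    (ha : ∀ i, (a i).IsHomogeneous 1) (hb : ∀ i, (b i).IsHomogeneous 1)
    (hab : ∀ i j, a i * b j - a j * b i ∈ Ideal.span (s : Set (MvPolynomial σ K))) :
    ∃ t : Finset (MvPolynomial σ K), s ⊆ t ∧ (∀ p ∈ t, p.IsHomogeneous 1) ∧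
      t.card ≤ s.card + max (Fintype.card ι) 2 ∧
      ∀ i, a i ∈ Submodule.span K (t : Set (MvPolynomial σ K)) ∧
        b i ∈ Submodule.span K (t : Set (MvPolynomial σ K)) := by
  classical
  suffices ∃ u : Finset (MvPolynomial σ K), (∀ p ∈ u, p.IsHomogeneous 1) ∧
      u.card ≤ max (Fintype.card ι) 2 ∧
      ∀ i, a i ∈ Submodule.span K ((s ∪ u : Finset _) : Set (MvPolynomial σ K)) ∧
        b i ∈ Submodule.span K ((s ∪ u : Finset _) : Set (MvPolynomial σ K)) by
    obtain ⟨u, hu, hcard, hspan⟩ := this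
    exact ⟨s ∪ u, Finset.subset_union_left, Finset.forall_mem_union.2 ⟨hs, hu⟩,
      (Finset.card_union_le s u).trans (Nat.add_le_add_left hcard _), hspan⟩
  have mem_left {u : Finset (MvPolynomial σ K)} {p}
      (hp : p ∈ Submodule.span K (s : Set (MvPolynomial σ K))) :
      p ∈ Submodule.span K ((s ∪ u : Finset _) : Set (MvPolynomial σ K)) :=
    Submodule.span_mono (Finset.coe_subset.2 Finset.subset_union_left) hp
  have mem_right {u : Finset (MvPolynomial σ K)} {p} (hp : p ∈ u) :
      p ∈ Submodule.span K ((s ∪ u : Finset _) : Set (MvPolynomial σ K)) :=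
    Submodule.subset_span (Finset.mem_union_right s hp)
  have of_sub_smul {u : Finset (MvPolynomial σ K)} {p q} {c : K}
      (hp : p - c • q ∈ Submodule.span K (s : Set (MvPolynomial σ K))) (hq : q ∈ u) :
      p ∈ Submodule.span K ((s ∪ u : Finset _) : Set (MvPolynomial σ K)) :=
    (Submodule.sub_mem_iff_left _ (Submodule.smul_mem _ c (mem_right hq))).1 (mem_left hp)
  have card_image (f : ι → MvPolynomial σ K) :
      (Finset.univ.image f).card ≤ max (Fintype.card ι) 2 :=
    Finset.card_image_le.trans (le_max_left _ _)
  rcases rank_one_trichotomy hs ha hb hab with h | ⟨c, h⟩ | ⟨k, h⟩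
  · exact ⟨Finset.univ.image b, by simpa using hb, card_image b,
      fun i => ⟨mem_left (h i), mem_right (by simp)⟩⟩
  · exact ⟨Finset.univ.image a, by simpa using ha, card_image a,
      fun i => ⟨mem_right (by simp), of_sub_smul (h i) (by simp)⟩⟩
  · refine ⟨{a k, b k}, by simp [ha k, hb k], Finset.card_le_two.trans (le_max_right _ _),
      fun i => ?_⟩
    obtain ⟨c, hac, hbc⟩ := h i
    exact ⟨of_sub_smul hac (by simp), of_sub_smul hbc (by simp)⟩

end LinearForms

section Extension

open CategoryTheory TensorProduct

variable {K : Type u} {σ : Type v} [Field K]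

theorem hasProjectiveDimensionLE_quotient_map {A : Type u} {B : Type (max u v)} [CommRing A]
    [CommRing B] {f : A →+* B} (hf : f.Flat) {J : Ideal A} {n : ℕ}
    (h : HasProjectiveDimensionLE (ModuleCat.of A (A ⧸ J)) n) :
    HasProjectiveDimensionLE (ModuleCat.of B (B ⧸ J.map f)) n := by
  let := f.toAlgebra
  have : Module.Flat A B := hf
  have := hasProjectiveDimensionLE_baseChange.{u, v} (B := B) h
  exact ModuleCat.hasProjectiveDimensionLE_of_linearEquiv (M := ModuleCat.of B (B ⊗[A] (A ⧸ J)))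
    (J.qoutMapEquivTensorQout B).symm n

theorem adjoin_eq_range_aeval_of_span_range_eq {ι A : Type*} [CommRing A] [Algebra K A]
    {s : Set A} {v : ι → A} (h : Submodule.span K (Set.range v) = Submodule.span K s) :
    Algebra.adjoin K s = (aeval v : MvPolynomial ι K →ₐ[K] A).range := by
  rw [← Algebra.adjoin_range_eq_range_aeval, ← Algebra.adjoin_span, ← h, Algebra.adjoin_span]

theorem hasProjectiveDimensionLE_quotient_of_subset_adjoin
    {s : Finset (MvPolynomial σ K)} (hs : ∀ p ∈ s, p.IsHomogeneous 1)
    {G : Set (MvPolynomial σ K)} (hG : G ⊆ Algebra.adjoin K (s : Set (MvPolynomial σ K))) :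
    HasProjectiveDimensionLE (ModuleCat.of (MvPolynomial σ K) (MvPolynomial σ K ⧸ Ideal.span G))
      s.card := by
  obtain ⟨v, hvs, hspan, hli⟩ :=
    Submodule.exists_fun_fin_finrank_span_eq K (s : Set (MvPolynomial σ K))
  let φ : MvPolynomial (Fin _) K →ₐ[K] MvPolynomial σ K := aeval v
  have hφ : φ.toRingHom.Flat := flat_aeval_of_linearIndependent hli fun i => hs _ (hvs i)
  have hmap : (Ideal.span (φ ⁻¹' G)).map φ.toRingHom = Ideal.span G := by
    rw [Ideal.map_span]
    congr 1
    refine Set.image_preimage_eq_of_subset (hG.trans ?_)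
    rw [adjoin_eq_range_aeval_of_span_range_eq hspan]
    exact subset_rfl
  have := hasProjectiveDimensionLE_quotient_map.{u, v} hφ
    (globalDimLE_mvPolynomial_fin K _ (ModuleCat.of _ (_ ⧸ Ideal.span (φ ⁻¹' G))))
  rw [hmap] at this
  exact hasProjectiveDimensionLT_of_ge _ (Module.finrank K _ + 1) _
    (Nat.succ_le_succ (finrank_span_finset_le_card s))

end Extension

section Multiplicity

theorem moduleLength_quotient_of_isMaximal {R : Type u} [CommRing R] (m : Ideal R) [m.IsMaximal] :
    moduleLength R (R ⧸ m) = 1 := by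
  have : IsSimpleModule R (R ⧸ m) := isSimpleModule_iff_isCoatom.2 (Ideal.IsMaximal.out (I := m))
  rw [moduleLength, ← Module.coe_length, Module.length_eq_one R (R ⧸ m)]
  rfl

theorem IsHSMultiplicity.eq_one_of_isMaximal {R : Type u} [CommRing R] {m : Ideal R}
    [hm : m.IsMaximal] {e : ℕ} (h : IsHSMultiplicity R m m e) : e = 1 := by
  obtain ⟨d, P, hd, hP, he, hev⟩ := h
  obtain rfl : d = 0 := by
    rw [ringKrullDim_eq_zero_of_isField
      ((Ideal.Quotient.maximal_ideal_iff_isField_quotient m).1 hm)] at hd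
    exact_mod_cast hd.symm
  obtain ⟨n, hn, k, hk, hlen⟩ := ((eventually_ge_atTop 1).and hev).exists
  have hk1 : k = 1 := by
    rw [sup_eq_left.2 (Ideal.pow_le_self (Nat.one_le_iff_ne_zero.1 hn)),
      moduleLength_quotient_of_isMaximal] at hlen
    exact_mod_cast hlen.symm
  rw [Polynomial.eq_C_of_natDegree_eq_zero hP] at hk he
  rw [Polynomial.leadingCoeff_C, Nat.factorial_zero, Nat.cast_one, mul_one] at he
  rw [Polynomial.eval_C, ← he, hk1] at hk
  exact_mod_cast hk.symm

theorem map_eq_maximalIdeal_of_mul_mem {R : Type*} [CommRing R] {I P : Ideal R} [P.IsPrime]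
    (hIP : I ≤ P) {d : R} (hd : d ∉ P) (h : ∀ p ∈ P, d * p ∈ I) :
    I.map (algebraMap R (Localization.AtPrime P)) =
      IsLocalRing.maximalIdeal (Localization.AtPrime P) := by
  rw [← Localization.AtPrime.map_eq_maximalIdeal]
  refine (Ideal.map_mono hIP).antisymm (Ideal.map_le_iff_le_comap.2 fun p hp => ?_)
  have hunit : IsUnit (algebraMap R (Localization.AtPrime P) d) :=
    IsLocalization.map_units _ (⟨d, hd⟩ : P.primeCompl)
  rw [Ideal.mem_comap, ← Ideal.unit_mul_mem_iff_mem _ hunit, ← map_mul]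
  exact Ideal.mem_map_of_mem _ (h p hp)

theorem det_mul_mem_of_mem_span_pair {R : Type*} [CommRing R] {I : Ideal R} {x y a b c d p : R}
    (hab : a * x + b * y ∈ I) (hcd : c * x + d * y ∈ I) (hp : p ∈ Ideal.span {x, y}) :
    (a * d - c * b) * p ∈ I := by
  obtain ⟨u, v, rfl⟩ := Ideal.mem_span_pair.1 hp
  convert add_mem (I.mul_mem_left (u * d - v * c) hab) (I.mul_mem_left (v * a - u * b) hcd) using 1
  ring

end Multiplicity

theorem stmt15_general {K : Type u} {σ : Type v} {ι : Type*} [Field K] [Fintype ι]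
    {x y : MvPolynomial σ K} (hx : x.IsHomogeneous 1) (hy : y.IsHomogeneous 1)
    [(Ideal.span {x, y}).IsPrime] {g : ι → MvPolynomial σ K} (hg : ∀ i, (g i).IsHomogeneous 2)
    (hle : Ideal.span (Set.range g) ≤ Ideal.span {x, y})
    (hmap : (Ideal.span (Set.range g)).map
        (algebraMap (MvPolynomial σ K) (Localization.AtPrime (Ideal.span {x, y}))) ≠
      IsLocalRing.maximalIdeal (Localization.AtPrime (Ideal.span {x, y}))) :
    projDim (MvPolynomial σ K) (MvPolynomial σ K ⧸ Ideal.span (Set.range g)) ≤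
      (max (Fintype.card ι) 2 + 2 : ℕ) := by
  classical
  have hgI (i) : g i ∈ Ideal.span (Set.range g) := Ideal.subset_span ⟨i, rfl⟩
  choose a b ha hb hab using fun i =>
    exists_eq_mul_add_mul_of_mem_span_pair (d := 1) hx hy (hg i) (hle (hgI i))
  have hminor (i j) : a i * b j - a j * b i ∈ Ideal.span {x, y} := by
    by_contra hd
    refine hmap (map_eq_maximalIdeal_of_mul_mem hle hd fun p hp => ?_)
    exact det_mul_mem_of_mem_span_pair (hab i ▸ hgI i) (hab j ▸ hgI j) hp
  obtain ⟨t, hxyt, ht, hcard, hspan⟩ := exists_finset_superset_of_rank_one (s := {x, y})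
    (by simp [hx, hy]) ha hb (by simpa using hminor)
  have hgt : Set.range g ⊆ Algebra.adjoin K (t : Set (MvPolynomial σ K)) := by
    rintro _ ⟨i, rfl⟩
    rw [← hab i]
    exact add_mem
      (mul_mem (Algebra.span_le_adjoin K _ (hspan i).1) (Algebra.subset_adjoin (hxyt (by simp))))
      (mul_mem (Algebra.span_le_adjoin K _ (hspan i).2) (Algebra.subset_adjoin (hxyt (by simp))))
  have htcard : t.card ≤ max (Fintype.card ι) 2 + 2 :=
    hcard.trans ((Nat.add_le_add_right Finset.card_le_two _).trans (Nat.add_comm _ _).le)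
  exact (projDim_le_of_hasProjectiveDimensionLE
    (hasProjectiveDimensionLE_quotient_of_subset_adjoin ht hgt)).trans (mod_cast htcard)

/-- if `I` is generated by `n ≥ 2` quadrics, contained in a height two
linear prime `(x, y)`, and the local multiplicity `e(R_(x,y)/I_(x,y)) ≥ 2`, then
`pd(R/I) ≤ n + 2`. -/
theorem stmt15 (K : Type u) [Field K] (N n : ℕ) (hn : 2 ≤ n)
    (x y : MvPolynomial (Fin N) K) (hx : x.IsHomogeneous 1) (hy : y.IsHomogeneous 1)
    (hxy : LinearIndependent K ![x, y])
    [hprime : (Ideal.span ({x, y} : Set (MvPolynomial (Fin N) K))).IsPrime]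
    (hht : idealHeight (Ideal.span ({x, y} : Set (MvPolynomial (Fin N) K))) = 2)
    (I : Ideal (MvPolynomial (Fin N) K)) (g : Fin n → MvPolynomial (Fin N) K)
    (hg : ∀ i, (g i).IsHomogeneous 2)
    (hI : I = Ideal.span (Set.range g))
    (hle : I ≤ Ideal.span {x, y})
    (hmult : ∃ e : ℕ, 2 ≤ e ∧
      IsHSMultiplicity (Localization.AtPrime (Ideal.span ({x, y} : Set (MvPolynomial (Fin N) K))))
        (IsLocalRing.maximalIdeal (Localization.AtPrime (Ideal.span ({x, y} : Set (MvPolynomial (Fin N) K)))))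
        (I.map (algebraMap (MvPolynomial (Fin N) K) (Localization.AtPrime (Ideal.span ({x, y} : Set (MvPolynomial (Fin N) K)))))) e) :
    projDim (MvPolynomial (Fin N) K) (MvPolynomial (Fin N) K ⧸ I) ≤ ((n + 2 : ℕ) : ℕ∞) := by
  subst hI
  obtain ⟨e, he, hmult⟩ := hmult
  simpa [max_eq_left hn] using
    stmt15_general hx hy hg hle fun hmap => by simp [(hmap ▸ hmult).eq_one_of_isMaximal] at he
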